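/- arXiv:1103.5960 — 6 statements merged into one kernel-verified Lean document; each statement's English description precedes it below -/
import Mathlib

section
/- Let E, F, G be real constants with F² + E·G > 0 and Q(u,v) = -E·u² + 2·F·u·v + G·v². Suppose E ≤ 0. Then for every C¹ curve c : [0,1] → ℝ² with Q(c'(t)) < 0 for all t ∈ [0,1], the second component t ↦ (c(t)).2 is strictly monotone on [0,1]; in particular there is no integer n with c(1) - c(0) = (n, 0). (Hence if ∂x is lightlike, i.e. E = 0, the flat Lorentzian cylinder is chronological: it admits no closed timelike curve.) -/
/-- The quadratic form of the flat Lorentzian metric `g = -E dx² + 2F dx dy + G dy²`. -/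
def Qform (E F G : ℝ) (p : ℝ × ℝ) : ℝ :=
  -E * p.1 ^ 2 + 2 * F * p.1 * p.2 + G * p.2 ^ 2

/-!
When `E ≤ 0` the horizontal direction is not timelike, so the vertical component of a timelike
velocity never vanishes. By Darboux's theorem it has constant sign along the curve, even where the
velocity is discontinuous. Hence the height is strictly monotone, whereas closing up on the
cylinder would force it to return to its initial value.
-/

theorem strictMonoOn_or_strictAntiOn_of_hasDerivWithinAt_ne_zero {s : Set ℝ} (hs : Convex ℝ s)
    {f f' : ℝ → ℝ} (hf : ContinuousOn f s)
    (hderiv : ∀ x ∈ interior s, HasDerivWithinAt f (f' x) (interior s) x)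
    (hne : ∀ x ∈ interior s, f' x ≠ 0) :
    StrictMonoOn f s ∨ StrictAntiOn f s := by
  rcases hasDerivWithinAt_forall_lt_or_forall_gt_of_forall_ne hs.interior hderiv hne
    with hneg | hpos
  · exact .inr (strictAntiOn_of_hasDerivWithinAt_neg hs hf hderiv hneg)
  · exact .inl (strictMonoOn_of_hasDerivWithinAt_pos hs hf hderiv hpos)

theorem Qform_mk_zero (E F G u : ℝ) : Qform E F G (u, 0) = -E * u ^ 2 := by
  simp [Qform]

theorem snd_ne_zero_of_Qform_neg {E F G : ℝ} (hE : E ≤ 0) {p : ℝ × ℝ}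
    (hp : Qform E F G p < 0) : p.2 ≠ 0 := by
  obtain ⟨u, v⟩ := p
  rintro rfl
  rw [Qform_mk_zero] at hp
  exact hp.not_ge (mul_nonneg (neg_nonneg.2 hE) (sq_nonneg u))

theorem stmt_2_general {E F G : ℝ} (hE : E ≤ 0) {s : Set ℝ} (hs : Convex ℝ s)
    {c c' : ℝ → ℝ × ℝ} (hc : ContinuousOn c s)
    (hderiv : ∀ t ∈ interior s, HasDerivAt c (c' t) t)
    (htime : ∀ t ∈ interior s, Qform E F G (c' t) < 0) :
    (StrictMonoOn (fun t => (c t).2) s ∨ StrictAntiOn (fun t => (c t).2) s) ∧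
      ∀ a ∈ s, ∀ b ∈ s, a ≠ b → ¬ ∃ r : ℝ, c b - c a = (r, 0) := by
  have hderiv_snd : ∀ t ∈ interior s, HasDerivAt (fun t => (c t).2) (c' t).2 t :=
    fun t ht => (ContinuousLinearMap.snd ℝ ℝ ℝ).hasFDerivAt.comp_hasDerivAt t (hderiv t ht)
  have hmono : StrictMonoOn (fun t => (c t).2) s ∨ StrictAntiOn (fun t => (c t).2) s :=
    strictMonoOn_or_strictAntiOn_of_hasDerivWithinAt_ne_zero hs hc.snd
      (fun t ht => (hderiv_snd t ht).hasDerivWithinAt)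
      (fun t ht => snd_ne_zero_of_Qform_neg hE (htime t ht))
  have hinj : s.InjOn (fun t => (c t).2) := hmono.elim StrictMonoOn.injOn StrictAntiOn.injOn
  refine ⟨hmono, ?_⟩
  rintro a ha b hb hab ⟨r, hr⟩
  have hheight : (c b).2 - (c a).2 = 0 := congrArg Prod.snd hr
  exact hab (hinj ha hb (sub_eq_zero.1 hheight).symm)

/-- If `E ≤ 0` (the fundamental field `∂x` is non-timelike), then along every timelike
C¹ curve the second coordinate is strictly monotone; in particular the curve cannot be
closed on the cylinder. -/
theorem stmt_2 (E F G : ℝ) (hLor : F ^ 2 + E * G > 0) (hE : E ≤ 0)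
    (c c' : ℝ → ℝ × ℝ)
    (hderiv : ∀ t ∈ Set.Icc (0 : ℝ) 1, HasDerivAt c (c' t) t)
    (hcont : ContinuousOn c' (Set.Icc (0 : ℝ) 1))
    (htime : ∀ t ∈ Set.Icc (0 : ℝ) 1, Qform E F G (c' t) < 0) :
    (StrictMonoOn (fun t => (c t).2) (Set.Icc (0 : ℝ) 1) ∨
      StrictAntiOn (fun t => (c t).2) (Set.Icc (0 : ℝ) 1)) ∧
    ¬ ∃ n : ℤ, c 1 - c 0 = ((n : ℝ), 0) := by
  have ⟨hmono, hopen⟩ := stmt_2_general hE (convex_Icc 0 1) (HasDerivAt.continuousOn hderiv)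
    (fun t ht => hderiv t (interior_subset ht)) (fun t ht => htime t (interior_subset ht))
  exact ⟨hmono, fun ⟨n, hn⟩ => hopen 0 (by simp) 1 (by simp) zero_ne_one ⟨n, hn⟩⟩
end

section
/- Let E, F, G be real constants with F² + E·G > 0 and Q(u,v) = -E·u² + 2·F·u·v + G·v². Suppose there exists a C¹ curve c : [0,1] → ℝ² with nowhere-vanishing derivative such that Q(c'(t)) ≤ 0 for all t ∈ [0,1] and c(1) - c(0) = (n,0) for some integer n. Then E ≥ 0. (This is the key step in the implication 'non-causal ⇒ ∂x is non-spacelike': a closed causal curve on the cylinder must have a point where its y-velocity vanishes, and there its tangent is a nonzero multiple of ∂x, forcing -E·(x'(t₀))² ≤ 0.) -/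
open Set

theorem exists_hasDerivAt_clm_apply_eq_zero {V : Type*} [NormedAddCommGroup V] [NormedSpace ℝ V]
    (ℓ : V →L[ℝ] ℝ) {c c' : ℝ → V} {a b : ℝ} (hab : a < b) (hcont : ContinuousOn c (Icc a b))
    (hends : ℓ (c a) = ℓ (c b)) (hderiv : ∀ t ∈ Ioo a b, HasDerivAt c (c' t) t) :
    ∃ t ∈ Ioo a b, ℓ (c' t) = 0 :=
  exists_hasDerivAt_eq_zero hab (ℓ.continuous.comp_continuousOn hcont) hends
    fun t ht => ℓ.hasFDerivAt.comp_hasDerivAt t (hderiv t ht)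

theorem qform_mk_zero (E F G u : ℝ) : Qform E F G (u, 0) = -(E * u ^ 2) := by
  simp [Qform]

theorem qform_mk_zero_nonpos_iff {E F G u : ℝ} (hu : u ≠ 0) :
    Qform E F G (u, 0) ≤ 0 ↔ 0 ≤ E := by
  rw [qform_mk_zero, neg_nonpos, mul_nonneg_iff_of_pos_right (by positivity)]

theorem stmt_4_general {E F G a b : ℝ} (hab : a < b) {c c' : ℝ → ℝ × ℝ}
    (hcont : ContinuousOn c (Icc a b))
    (hderiv : ∀ t ∈ Ioo a b, HasDerivAt c (c' t) t)
    (hne : ∀ t ∈ Ioo a b, c' t ≠ 0)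
    (hcausal : ∀ t ∈ Ioo a b, Qform E F G (c' t) ≤ 0)
    (hends : (c a).2 = (c b).2) :
    0 ≤ E := by
  obtain ⟨t, ht, hsnd : (c' t).2 = 0⟩ :=
    exists_hasDerivAt_clm_apply_eq_zero (.snd ℝ ℝ ℝ) hab hcont hends hderiv
  have htangent : c' t = ((c' t).1, 0) := Prod.ext rfl hsnd
  have hfst : (c' t).1 ≠ 0 := fun h => hne t ht (Prod.ext h hsnd)
  have hQ : Qform E F G ((c' t).1, 0) ≤ 0 := htangent ▸ hcausal t ht
  exact (qform_mk_zero_nonpos_iff hfst).mp hQ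

/-- If the flat Lorentzian cylinder admits a closed causal curve (a C¹ curve with
nowhere-vanishing derivative, everywhere non-spacelike tangent, closed on the cylinder),
then the fundamental field `∂x` is non-spacelike, i.e. `E ≥ 0`. -/
theorem stmt_4 (E F G : ℝ) (hLor : F ^ 2 + E * G > 0)
    (c c' : ℝ → ℝ × ℝ)
    (hderiv : ∀ t ∈ Set.Icc (0 : ℝ) 1, HasDerivAt c (c' t) t)
    (hcont : ContinuousOn c' (Set.Icc (0 : ℝ) 1))
    (hne : ∀ t ∈ Set.Icc (0 : ℝ) 1, c' t ≠ 0)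
    (hcausal : ∀ t ∈ Set.Icc (0 : ℝ) 1, Qform E F G (c' t) ≤ 0)
    (n : ℤ) (hclosed : c 1 - c 0 = ((n : ℝ), 0)) :
    E ≥ 0 := by
  have hends : (c 0).2 = (c 1).2 := (sub_eq_zero.mp (congrArg Prod.snd hclosed)).symm
  exact stmt_4_general zero_lt_one
    (fun t ht => (hderiv t ht).continuousAt.continuousWithinAt)
    (fun t ht => hderiv t (Ioo_subset_Icc_self ht)) (fun t ht => hne t (Ioo_subset_Icc_self ht))
    (fun t ht => hcausal t (Ioo_subset_Icc_self ht)) hends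
end

section
/- Let E, F, G be real constants with F² + E·G > 0 and Q(u,v) = -E·u² + 2·F·u·v + G·v². Suppose there exists a C¹ curve c : [0,1] → ℝ² such that Q(c'(t)) < 0 for all t ∈ [0,1] and c(1) - c(0) = (n,0) for some integer n. Then E > 0. (This is Theorem 2, (v) ⇒ (i): if the flat Lorentzian cylinder admits a closed timelike curve, then the fundamental vector field ∂x is timelike.) -/
theorem Qform_eq_of_snd_eq_zero (E F G : ℝ) {p : ℝ × ℝ} (hp : p.2 = 0) :
    Qform E F G p = -(E * p.1 ^ 2) := by
  simp [Qform, hp]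

theorem pos_of_Qform_neg_of_snd_eq_zero {E F G : ℝ} {p : ℝ × ℝ} (hQ : Qform E F G p < 0)
    (hp : p.2 = 0) : 0 < E := by
  rw [Qform_eq_of_snd_eq_zero E F G hp, neg_lt_zero] at hQ
  exact pos_of_mul_pos_left hQ (sq_nonneg p.1)

theorem exists_clm_hasDerivAt_eq_zero {V : Type*} [NormedAddCommGroup V] [NormedSpace ℝ V]
    (ℓ : V →L[ℝ] ℝ) {c c' : ℝ → V} {a b : ℝ} (hab : a < b)
    (hcont : ContinuousOn c (Set.Icc a b))
    (hderiv : ∀ t ∈ Set.Ioo a b, HasDerivAt c (c' t) t)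
    (hends : ℓ (c a) = ℓ (c b)) : ∃ t ∈ Set.Ioo a b, ℓ (c' t) = 0 :=
  exists_hasDerivAt_eq_zero hab (ℓ.continuous.comp_continuousOn hcont) hends
    fun t ht => ℓ.hasFDerivAt.comp_hasDerivAt t (hderiv t ht)

theorem stmt_5_general {E F G : ℝ} {c c' : ℝ → ℝ × ℝ} {a b : ℝ} (hab : a < b)
    (hcont : ContinuousOn c (Set.Icc a b))
    (hderiv : ∀ t ∈ Set.Ioo a b, HasDerivAt c (c' t) t)
    (htime : ∀ t ∈ Set.Ioo a b, Qform E F G (c' t) < 0)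
    (hends : (c a).2 = (c b).2) : 0 < E := by
  obtain ⟨t, ht, hhorizontal⟩ :=
    exists_clm_hasDerivAt_eq_zero (ContinuousLinearMap.snd ℝ ℝ ℝ) hab hcont hderiv hends
  exact pos_of_Qform_neg_of_snd_eq_zero (htime t ht) hhorizontal

/-- Theorem 2, (v) ⇒ (i): if the flat Lorentzian cylinder admits a closed timelike
curve, then the fundamental vector field `∂x` is timelike, i.e. `E > 0`. -/
theorem stmt_5 (E F G : ℝ) (hLor : F ^ 2 + E * G > 0)
    (c c' : ℝ → ℝ × ℝ)
    (hderiv : ∀ t ∈ Set.Icc (0 : ℝ) 1, HasDerivAt c (c' t) t)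
    (hcont : ContinuousOn c' (Set.Icc (0 : ℝ) 1))
    (htime : ∀ t ∈ Set.Icc (0 : ℝ) 1, Qform E F G (c' t) < 0)
    (n : ℤ) (hclosed : c 1 - c 0 = ((n : ℝ), 0)) :
    E > 0 := by
  have hends : (c 0).2 = (c 1).2 := (sub_eq_zero.mp (congrArg Prod.snd hclosed)).symm
  exact stmt_5_general zero_lt_one (HasDerivAt.continuousOn hderiv)
    (fun t ht => hderiv t (Set.Ioo_subset_Icc_self ht))
    (fun t ht => htime t (Set.Ioo_subset_Icc_self ht)) hends
end

section
/- Let E, F, G be real constants with F² + E·G > 0 and Q(u,v) = -E·u² + 2·F·u·v + G·v², and suppose E < 0. Realize the cylinder as (AddCircle (1:ℝ)) × ℝ with projection π : ℝ² → (AddCircle 1) × ℝ, π(x,y) = (x mod 1, y). Call a C¹ curve c : [0,1] → ℝ² future-directed causal if c' is continuous and nowhere vanishing, Q(c'(t)) ≤ 0 for all t, and (c'(t)).2 > 0 for all t. Fix p = (x₀,y₀) and q = (x₁,y₁) in ℝ² with y₀ ≤ y₁, and define the causal diamond D ⊆ (AddCircle 1) × ℝ as the set of points π(z), z ∈ ℝ²,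 such that either z = p or there is a future-directed causal curve from p to z, and either z = q + (m,0) for some integer m or there is a future-directed causal curve from z to q + (m,0) for some integer m. Then D ⊆ π '' (ℝ × [y₀, y₁]) and the closure of D in (AddCircle 1) × ℝ is compact. (This is the compact-diamonds part of Theorem 2, (iv) ⇒ (vi): if ∂x is spacelike, the cylinder spacetime is globally hyperbolic.) -/
/-- The covering projection `π : ℝ² → (ℝ/ℤ) × ℝ` onto the cylinder. -/
noncomputable def cylProj (z : ℝ × ℝ) : AddCircle (1 : ℝ) × ℝ :=
  ((z.1 : AddCircle (1 : ℝ)), z.2)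

/-- A future-directed causal C¹ curve in the plane: the derivative `c'` is continuous
and nowhere vanishing on `[0,1]`, everywhere non-spacelike, and has positive second
component. -/
def FutureCausal (E F G : ℝ) (c : ℝ → ℝ × ℝ) : Prop :=
  ∃ c' : ℝ → ℝ × ℝ,
    (∀ t ∈ Set.Icc (0 : ℝ) 1, HasDerivAt c (c' t) t) ∧
    ContinuousOn c' (Set.Icc (0 : ℝ) 1) ∧
    (∀ t ∈ Set.Icc (0 : ℝ) 1, c' t ≠ 0) ∧
    (∀ t ∈ Set.Icc (0 : ℝ) 1, Qform E F G (c' t) ≤ 0) ∧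
    (∀ t ∈ Set.Icc (0 : ℝ) 1, (c' t).2 > 0)

namespace FutureCausal

variable {E F G : ℝ} {c : ℝ → ℝ × ℝ}

theorem strictMonoOn_snd (hc : FutureCausal E F G c) :
    StrictMonoOn (fun t => (c t).2) (Set.Icc 0 1) := by
  obtain ⟨c', hderiv, -, -, -, hpos⟩ := hc
  have hsnd : ∀ t ∈ Set.Icc (0 : ℝ) 1, HasDerivAt (fun s => (c s).2) (c' t).2 t :=
    fun t ht => (hderiv t ht).snd
  exact strictMonoOn_of_hasDerivWithinAt_pos (convex_Icc 0 1)
    (fun t ht => (hsnd t ht).continuousAt.continuousWithinAt)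
    (fun t ht => (hsnd t (interior_subset ht)).hasDerivWithinAt)
    (fun t ht => hpos t (interior_subset ht))

theorem snd_lt (hc : FutureCausal E F G c) : (c 0).2 < (c 1).2 :=
  hc.strictMonoOn_snd (Set.left_mem_Icc.2 zero_le_one) (Set.right_mem_Icc.2 zero_le_one) one_pos

end FutureCausal

/-- The causal relation `p ≤ q` of the universal cover: `q` lies in `J⁺(p)`, that is, `q = p` or
some future-directed causal curve runs from `p` to `q`. -/
def CausallyPrecedes (E F G : ℝ) (p q : ℝ × ℝ) : Prop :=
  q = p ∨ ∃ c : ℝ → ℝ × ℝ, FutureCausal E F G c ∧ c 0 = p ∧ c 1 = q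

theorem CausallyPrecedes.snd_le {E F G : ℝ} {p q : ℝ × ℝ} (h : CausallyPrecedes E F G p q) :
    p.2 ≤ q.2 := by
  rcases h with rfl | ⟨c, hc, rfl, rfl⟩
  · exact le_rfl
  · exact hc.snd_lt.le

/-- The causal diamond `J⁺(π p) ∩ J⁻(π q)` on the cylinder. It is described upstairs: a causal curve
on the cylinder ending at `π q` lifts to one ending at some deck translate of `q`, and the deck
translation on the side of `p` is absorbed by the choice of lift `z`. -/
def causalDiamond (E F G : ℝ) (p q : ℝ × ℝ) : Set (AddCircle (1 : ℝ) × ℝ) :=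
  cylProj '' {z | CausallyPrecedes E F G p z ∧
    ∃ m : ℤ, CausallyPrecedes E F G z (q + ((m : ℝ), 0))}

theorem causalDiamond_subset_slab (E F G : ℝ) (p q : ℝ × ℝ) :
    causalDiamond E F G p q ⊆ cylProj '' (Set.univ ×ˢ Set.Icc p.2 q.2) := by
  refine Set.image_mono fun z ⟨hpz, m, hzq⟩ => ⟨Set.mem_univ _, hpz.snd_le, ?_⟩
  simpa only [Prod.snd_add, add_zero] using hzq.snd_le

theorem cylProj_image_univ_prod (s : Set ℝ) :
    cylProj '' (Set.univ ×ˢ s) = Set.univ ×ˢ s := by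
  have hprod : cylProj = Prod.map (QuotientAddGroup.mk : ℝ → AddCircle (1 : ℝ)) id := rfl
  rw [hprod, Set.prodMap_image_prod, Set.image_id,
    Set.image_univ_of_surjective QuotientAddGroup.mk_surjective]

theorem isCompact_cylProj_image_univ_prod {s : Set ℝ} (hs : IsCompact s) :
    IsCompact (cylProj '' (Set.univ ×ˢ s)) := by
  rw [cylProj_image_univ_prod]
  exact isCompact_univ.prod hs

theorem stmt_9_general (E F G : ℝ) (p q : ℝ × ℝ) :
    causalDiamond E F G p q ⊆ cylProj '' (Set.univ ×ˢ Set.Icc p.2 q.2) ∧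
      IsCompact (closure (causalDiamond E F G p q)) :=
  have hsub := causalDiamond_subset_slab E F G p q
  ⟨hsub, (isCompact_cylProj_image_univ_prod isCompact_Icc).closure_of_subset hsub⟩

/-- Compactness of causal diamonds (Theorem 2, (iv) ⇒ (vi)): if `E < 0`, the causal
diamond `J⁺(p) ∩ J⁻(q)` on the cylinder is contained in the compact slab
`S¹ × [y₀, y₁]`, and its closure is compact. -/
theorem stmt_9 (E F G : ℝ) (hLor : F ^ 2 + E * G > 0) (hE : E < 0)
    (x₀ y₀ x₁ y₁ : ℝ) (hy : y₀ ≤ y₁)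
    (D : Set (AddCircle (1 : ℝ) × ℝ))
    (hD : D = {w : AddCircle (1 : ℝ) × ℝ | ∃ z : ℝ × ℝ, w = cylProj z ∧
      (z = (x₀, y₀) ∨
        ∃ c : ℝ → ℝ × ℝ, FutureCausal E F G c ∧ c 0 = (x₀, y₀) ∧ c 1 = z) ∧
      ((∃ m : ℤ, z = (x₁ + (m : ℝ), y₁)) ∨
        ∃ m : ℤ, ∃ c : ℝ → ℝ × ℝ, FutureCausal E F G c ∧ c 0 = z ∧
          c 1 = (x₁ + (m : ℝ), y₁))}) :
    D ⊆ cylProj '' (Set.univ ×ˢ Set.Icc y₀ y₁) ∧ IsCompact (closure D) := by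
  have hdiamond : D = causalDiamond E F G (x₀, y₀) (x₁, y₁) := by
    ext w
    simp [hD, causalDiamond, CausallyPrecedes, exists_or, eq_comm, and_comm]
  exact hdiamond ▸ stmt_9_general E F G (x₀, y₀) (x₁, y₁)
end

section
/- Let E, F, G be real constants with F² + E·G > 0 and Q(u,v) = -E·u² + 2·F·u·v + G·v². Then E = 0 if and only if both of the following hold: (a) there exists a C¹ curve c : [0,1] → ℝ² with continuous nowhere-vanishing derivative, Q(c'(t)) ≤ 0 for all t, and c(1) - c(0) = (n,0) for some integer n (the flat Lorentzian cylinder is non-causal); and (b) there is no C¹ curve c : [0,1] → ℝ² with Q(c'(t)) < 0 for all t and c(1) - c(0) = (n,0) for some integer n (the flat Lorentzian cylinder is chronological). (This is Theorem 1: the fundamental vector field ∂x is lightlike if and only if the flat Lorentzian cylinder spacetime is chronological but non-causal.) -/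
/-- The flat Lorentzian cylinder admits a closed causal curve: a C¹ curve with
continuous nowhere-vanishing derivative, everywhere non-spacelike tangent, and
`c 1 - c 0 = (n, 0)` for some integer `n`. -/
def ExistsClosedCausal (E F G : ℝ) : Prop :=
  ∃ c c' : ℝ → ℝ × ℝ,
    (∀ t ∈ Set.Icc (0 : ℝ) 1, HasDerivAt c (c' t) t) ∧
    ContinuousOn c' (Set.Icc (0 : ℝ) 1) ∧
    (∀ t ∈ Set.Icc (0 : ℝ) 1, c' t ≠ 0) ∧
    (∀ t ∈ Set.Icc (0 : ℝ) 1, Qform E F G (c' t) ≤ 0) ∧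
    ∃ n : ℤ, c 1 - c 0 = ((n : ℝ), 0)

/-- The flat Lorentzian cylinder admits a closed timelike curve: a C¹ curve with
continuous derivative, everywhere timelike tangent, and `c 1 - c 0 = (n, 0)` for some
integer `n`. -/
def ExistsClosedTimelike (E F G : ℝ) : Prop :=
  ∃ c c' : ℝ → ℝ × ℝ,
    (∀ t ∈ Set.Icc (0 : ℝ) 1, HasDerivAt c (c' t) t) ∧
    ContinuousOn c' (Set.Icc (0 : ℝ) 1) ∧
    (∀ t ∈ Set.Icc (0 : ℝ) 1, Qform E F G (c' t) < 0) ∧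
    ∃ n : ℤ, c 1 - c 0 = ((n : ℝ), 0)

/-!
By Rolle's theorem a closed curve on the cylinder has a horizontal velocity `(u, 0)` at some time,
where `Q(u, 0) = -E u²`; hence a closed timelike curve forces `0 < E` and a closed causal curve
forces `0 ≤ E`. Conversely, the closed orbits of `∂x` have constant `Q = -E`.
-/

theorem exists_hasDerivAt_apply_eq_zero {V : Type*} [NormedAddCommGroup V] [NormedSpace ℝ V]
    (ℓ : V →L[ℝ] ℝ) {c c' : ℝ → V} {a b : ℝ} (hab : a < b) (hcont : ContinuousOn c (Set.Icc a b))
    (hc : ∀ t ∈ Set.Ioo a b, HasDerivAt c (c' t) t) (hends : ℓ (c a) = ℓ (c b)) :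
    ∃ t ∈ Set.Ioo a b, ℓ (c' t) = 0 :=
  exists_hasDerivAt_eq_zero hab (ℓ.continuous.comp_continuousOn hcont) hends
    fun t ht => ℓ.hasFDerivAt.comp_hasDerivAt t (hc t ht)

theorem exists_hasDerivAt_eq_horizontal {V : Type*} [NormedAddCommGroup V] [NormedSpace ℝ V]
    {c c' : ℝ → V × ℝ} {a b : ℝ} (hab : a < b)
    (hc : ∀ t ∈ Set.Icc a b, HasDerivAt c (c' t) t) {v : V} (hclosed : c b - c a = (v, 0)) :
    ∃ t ∈ Set.Icc a b, ∃ u : V, c' t = (u, 0) := by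
  have hends : (c a).2 = (c b).2 := (sub_eq_zero.mp (congrArg Prod.snd hclosed)).symm
  obtain ⟨t, ht, hsnd⟩ := exists_hasDerivAt_apply_eq_zero (ContinuousLinearMap.snd ℝ V ℝ) hab
    (HasDerivAt.continuousOn hc) (fun t ht => hc t (Set.Ioo_subset_Icc_self ht)) hends
  exact ⟨t, Set.Ioo_subset_Icc_self ht, (c' t).1, Prod.ext rfl hsnd⟩

theorem hasDerivAt_horizontal_line (y t : ℝ) :
    HasDerivAt (fun s : ℝ => (s, y)) ((1 : ℝ), (0 : ℝ)) t :=
  (hasDerivAt_id t).prodMk (hasDerivAt_const t y)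

section Cylinder

variable {E F G : ℝ}

theorem Qform_horizontal (u : ℝ) : Qform E F G (u, 0) = -(E * u ^ 2) := by
  simp [Qform]

theorem existsClosedTimelike_iff : ExistsClosedTimelike E F G ↔ 0 < E := by
  constructor
  · rintro ⟨c, c', hc, -, hQ, n, hclosed⟩
    obtain ⟨t, ht, u, hu⟩ := exists_hasDerivAt_eq_horizontal zero_lt_one hc hclosed
    have hpos : 0 < E * u ^ 2 := by simpa only [hu, Qform_horizontal, neg_lt_zero] using hQ t ht
    exact pos_of_mul_pos_left hpos (sq_nonneg u)
  · intro hE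
    exact ⟨fun s => (s, 0), fun _ => (1, 0), fun t _ => hasDerivAt_horizontal_line 0 t,
      continuousOn_const, fun _ _ => by simpa [Qform_horizontal] using hE, 1, by simp⟩

theorem existsClosedCausal_iff : ExistsClosedCausal E F G ↔ 0 ≤ E := by
  constructor
  · rintro ⟨c, c', hc, -, hne, hQ, n, hclosed⟩
    obtain ⟨t, ht, u, hu⟩ := exists_hasDerivAt_eq_horizontal zero_lt_one hc hclosed
    have hu₀ : u ≠ 0 := fun h => hne t ht (by simp [hu, h])
    have hnonneg : 0 ≤ E * u ^ 2 := by
      simpa only [hu, Qform_horizontal, neg_nonpos] using hQ t ht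
    exact nonneg_of_mul_nonneg_left hnonneg (sq_pos_of_ne_zero hu₀)
  · intro hE
    exact ⟨fun s => (s, 0), fun _ => (1, 0), fun t _ => hasDerivAt_horizontal_line 0 t,
      continuousOn_const, fun _ _ => by simp, fun _ _ => by simpa [Qform_horizontal] using hE,
      1, by simp⟩

end Cylinder

theorem stmt_10_general (E F G : ℝ) :
    E = 0 ↔ ExistsClosedCausal E F G ∧ ¬ ExistsClosedTimelike E F G := by
  rw [existsClosedCausal_iff, existsClosedTimelike_iff, not_lt, and_comm]
  exact le_antisymm_iff

/-- Theorem 1: the fundamental vector field `∂x` is lightlike (`E = 0`) if and only if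
the flat Lorentzian cylinder spacetime is chronological but non-causal. -/
theorem stmt_10 (E F G : ℝ) (hLor : F ^ 2 + E * G > 0) :
    E = 0 ↔ ExistsClosedCausal E F G ∧ ¬ ExistsClosedTimelike E F G :=
  stmt_10_general E F G
end

section
/- Let E, F, G be real constants with F² + E·G > 0 and Q(u,v) = -E·u² + 2·F·u·v + G·v². Then the following are equivalent: (i) E > 0; (ii) there exists a C¹ curve c : [0,1] → ℝ² with Q(c'(t)) < 0 for all t and c(1) - c(0) = (n,0) for some integer n; (iii) for every (x₀,y₀) ∈ ℝ² there exists a C¹ curve c : [0,1] → ℝ² with c(0) = (x₀,y₀), Q(c'(t)) < 0 for all t, and c(1) - c(0) = (n,0) for some integer n. (This is the totally-vicious part of Theorem 2: ∂x is timelike iff the flat Lorentzian cylinder admits a closed timelike curve iff it is totally vicious.) -/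
open Set

theorem qform_horizontal_neg_iff {E F G u : ℝ} : Qform E F G (u, 0) < 0 ↔ 0 < E ∧ u ≠ 0 := by
  have hval : Qform E F G (u, 0) = -(E * u ^ 2) := by simp [Qform]
  rw [hval, neg_lt_zero]
  constructor
  · intro h
    exact ⟨pos_of_mul_pos_left h (sq_nonneg u), fun hu => by simp [hu] at h⟩
  · rintro ⟨hE, hu⟩
    positivity

theorem exists_hasDerivAt_clm_eq_zero {V : Type*} [NormedAddCommGroup V] [NormedSpace ℝ V]
    (ℓ : V →L[ℝ] ℝ) {c c' : ℝ → V} {a b : ℝ} (hab : a < b) (hcont : ContinuousOn c (Icc a b))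
    (hderiv : ∀ t ∈ Ioo a b, HasDerivAt c (c' t) t) (hends : ℓ (c a) = ℓ (c b)) :
    ∃ t ∈ Ioo a b, ℓ (c' t) = 0 :=
  exists_hasDerivAt_eq_zero hab (ℓ.continuous.comp_continuousOn hcont) hends
    fun t ht => ℓ.hasFDerivAt.comp_hasDerivAt t (hderiv t ht)

/-- A lift `c : [0,1] → ℝ²` of a closed timelike `C¹` curve on the cylinder `ℝ² / (ℤ × 0)`, with
velocity `c'`, for the translation-invariant metric whose value on a tangent vector `v` is `Q v`.
The lift is a function on all of `ℝ`, so at the endpoints of `[0,1]` its derivatives are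
two-sided. -/
def IsClosedTimelikeCurve (Q : ℝ × ℝ → ℝ) (c c' : ℝ → ℝ × ℝ) : Prop :=
  (∀ t ∈ Icc (0 : ℝ) 1, HasDerivAt c (c' t) t) ∧
  ContinuousOn c' (Icc (0 : ℝ) 1) ∧
  (∀ t ∈ Icc (0 : ℝ) 1, Q (c' t) < 0) ∧
  (∃ n : ℤ, c 1 - c 0 = ((n : ℝ), 0))

theorem isClosedTimelikeCurve_add_smul {Q : ℝ × ℝ → ℝ} {n : ℤ} (hn : Q (n, 0) < 0)
    (p : ℝ × ℝ) :
    IsClosedTimelikeCurve Q (fun t => p + t • ((n : ℝ), (0 : ℝ))) (fun _ => ((n : ℝ), 0)) := by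
  refine ⟨fun t _ => ?_, continuousOn_const, fun _ _ => hn, n, by simp⟩
  simpa only [id, one_smul] using
    ((hasDerivAt_id t).smul_const ((n : ℝ), (0 : ℝ))).const_add p

theorem IsClosedTimelikeCurve.exists_horizontal_neg {Q : ℝ × ℝ → ℝ} {c c' : ℝ → ℝ × ℝ}
    (hc : IsClosedTimelikeCurve Q c c') : ∃ u : ℝ, Q (u, 0) < 0 := by
  obtain ⟨hderiv, -, hneg, n, hn⟩ := hc
  have hends : (c 0).2 = (c 1).2 := (sub_eq_zero.mp (congrArg Prod.snd hn)).symm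
  obtain ⟨t, ht, hvel⟩ : ∃ t ∈ Ioo (0 : ℝ) 1, (c' t).2 = 0 :=
    exists_hasDerivAt_clm_eq_zero (ContinuousLinearMap.snd ℝ ℝ ℝ) zero_lt_one
      (HasDerivAt.continuousOn hderiv) (fun t ht => hderiv t (Ioo_subset_Icc_self ht)) hends
  exact ⟨(c' t).1, hvel ▸ hneg t (Ioo_subset_Icc_self ht)⟩

theorem stmt_11_general (E F G : ℝ) :
    List.TFAE [
      E > 0,
      ∃ c c' : ℝ → ℝ × ℝ, IsClosedTimelikeCurve (Qform E F G) c c',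
      ∀ x₀ y₀ : ℝ, ∃ c c' : ℝ → ℝ × ℝ,
        c 0 = (x₀, y₀) ∧ IsClosedTimelikeCurve (Qform E F G) c c'] := by
  tfae_have 1 → 3 := by
    intro hE x₀ y₀
    have hunit : Qform E F G ((1 : ℤ), 0) < 0 :=
      qform_horizontal_neg_iff.mpr ⟨hE, by norm_num⟩
    exact ⟨_, _, by simp, isClosedTimelikeCurve_add_smul hunit (x₀, y₀)⟩
  tfae_have 3 → 2 := by
    intro hvicious
    obtain ⟨c, c', -, hc⟩ := hvicious 0 0
    exact ⟨c, c', hc⟩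
  tfae_have 2 → 1 := by
    rintro ⟨c, c', hc⟩
    obtain ⟨u, hu⟩ := hc.exists_horizontal_neg
    exact (qform_horizontal_neg_iff.mp hu).1
  tfae_finish

/-- Theorem 2, totally-vicious part: `∂x` is timelike (`E > 0`) iff the flat Lorentzian
cylinder admits a closed timelike curve iff through every point there passes a closed
timelike curve. -/
theorem stmt_11 (E F G : ℝ) (hLor : F ^ 2 + E * G > 0) :
    List.TFAE [
      E > 0,
      ∃ c c' : ℝ → ℝ × ℝ,
        (∀ t ∈ Set.Icc (0 : ℝ) 1, HasDerivAt c (c' t) t) ∧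
        ContinuousOn c' (Set.Icc (0 : ℝ) 1) ∧
        (∀ t ∈ Set.Icc (0 : ℝ) 1, Qform E F G (c' t) < 0) ∧
        (∃ n : ℤ, c 1 - c 0 = ((n : ℝ), 0)),
      ∀ x₀ y₀ : ℝ, ∃ c c' : ℝ → ℝ × ℝ,
        c 0 = (x₀, y₀) ∧
        (∀ t ∈ Set.Icc (0 : ℝ) 1, HasDerivAt c (c' t) t) ∧
        ContinuousOn c' (Set.Icc (0 : ℝ) 1) ∧
        (∀ t ∈ Set.Icc (0 : ℝ) 1, Qform E F G (c' t) < 0) ∧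
        (∃ n : ℤ, c 1 - c 0 = ((n : ℝ), 0))] := by
  exact stmt_11_general E F G
end
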